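/- Assume L/2 ≥ M ≥ r, L ≥ M+1, and π(x|Y) ≥ γ > 0 for all x, Y. Let S be a finite index set and, for each h ∈ S, let σ^{(h)} and σ̃^{(h)} be probability vectors on {1,…,M} with entries σ^{(h)}_{−j} and σ̃^{(h)}_{−i}. For the chain X = (x_1,…,x_{L+1}) ∼ p set v_l^{(h)} = Σ_{j=1}^{M} σ^{(h)}_{−j} x_{l−j} and ṽ_{L+1}^{(h)} = Σ_{i=1}^{M} σ̃^{(h)}_{−i} x_{L+1−i}. Let (x, X̄) and (z, Z̄) be independent, each distributed as the stationary window distribution μ̄ on 𝒳^{M+1}, written X̄ = (x_{−M},…,x_{−1}) and Z̄ = (z_{−M},…,z_{−1}), and set v^{(h)}(X̄) = Σ_{j=1}^{M} σ^{(h)}_{−j} x_{−j} and ṽ^{(h)}(Z̄) = Σ_{i=1}^{M} σ̃^{(h)}_{−i} z_{−i}. Let q(e) denote the single-token marginal of μ̄ at its last coordinate. Define A = (L−M)^{−1} Σ_{l=M+1}^{L} E_{X∼p}[ ( Σ_{k=1}^{d} 1{x_{L+1}=x_l=e_k}/q(e_k) − 1 ) · ∏_{h∈S} ⟨v_l^{(h)},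 ṽ_{L+1}^{(h)}⟩ ] and B = E[ ( Σ_{k=1}^{d} 1{x=z=e_k}/q(e_k) − 1 ) · ∏_{h∈S} ⟨ṽ^{(h)}(Z̄), v^{(h)}(X̄)⟩ ]. Then |A − B| ≤ 8M/(Lγ) + 16√(D₀+1) / ( L(1−λ)·γ^{|S|/2+1} ). -/

import Mathlib

open Finset

/-- Probability of the full sequence `x` (tokens indexed `0,…,T-1`, i.e. `x_1,…,x_T`)
under the `n`-gram Markov chain with parent offsets `r`, transition kernel `pk`,
and initial distribution `init` on the first `R` tokens. -/
noncomputable def ngramProb (d n R T : ℕ) (r : Fin n → ℕ)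
    (pk : (Fin n → Fin d) → Fin d → ℝ) (init : (Fin R → Fin d) → ℝ)
    (hRT : R ≤ T) (x : Fin T → Fin d) : ℝ :=
  init (fun i => x ⟨i.1, lt_of_lt_of_le i.2 hRT⟩) *
    ∏ l ∈ (Finset.Ico R T).attach,
      pk (fun k => x ⟨l.1 - r k, lt_of_le_of_lt (Nat.sub_le _ _) (Finset.mem_Ico.mp l.2).2⟩)
        (x ⟨l.1, (Finset.mem_Ico.mp l.2).2⟩)

/-- The window transition matrix `P_π` on `𝒳^R` of the `n`-gram chain:
`P(Z', Z) = π(z'_R | Z parents) · 1{Z' is the shift of Z}`. -/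
noncomputable def windowMatrix (d n R : ℕ) (hR : 0 < R) (r : Fin n → ℕ)
    (hrpos : ∀ k, 0 < r k) (pk : (Fin n → Fin d) → Fin d → ℝ) :
    Matrix (Fin R → Fin d) (Fin R → Fin d) ℝ :=
  Matrix.of fun Z' Z =>
    if ∀ j : Fin (R - 1),
        Z' ⟨j.1, lt_of_lt_of_le j.2 (Nat.sub_le R 1)⟩ = Z ⟨j.1 + 1, by have := j.2; omega⟩ then
      pk (fun k => Z ⟨R - r k, Nat.sub_lt hR (hrpos k)⟩) (Z' ⟨R - 1, Nat.sub_lt hR Nat.one_pos⟩)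
    else 0

/-- The matrix `K - √μ (√μ)ᵀ` where `K = diag(√μ)⁻¹ P_π diag(√μ)`. -/
noncomputable def specA (d n R : ℕ) (hR : 0 < R) (r : Fin n → ℕ) (hrpos : ∀ k, 0 < r k)
    (pk : (Fin n → Fin d) → Fin d → ℝ) (μ : (Fin R → Fin d) → ℝ) :
    Matrix (Fin R → Fin d) (Fin R → Fin d) ℝ :=
  (Matrix.diagonal fun Z => (Real.sqrt (μ Z))⁻¹) * windowMatrix d n R hR r hrpos pk *
      (Matrix.diagonal fun Z => Real.sqrt (μ Z)) -
    Matrix.vecMulVec (fun Z => Real.sqrt (μ Z)) (fun Z => Real.sqrt (μ Z))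

/-- Total variation distance: half the ℓ₁ distance. -/
noncomputable def tvDist {α : Type*} [Fintype α] (p q : α → ℝ) : ℝ :=
  (∑ w, |p w - q w|) / 2

/-- χ²-divergence `D_{χ²}(p ‖ q) = Σ_ω (p ω - q ω)² / q ω`. -/
noncomputable def chiSq {α : Type*} [Fintype α] (p q : α → ℝ) : ℝ :=
  ∑ w, (p w - q w) ^ 2 / q w

theorem icoLtSucc {M L : ℕ} (l : {m // m ∈ Finset.Ico M L}) : l.1 < L + 1 :=
  Nat.lt_succ_of_lt (Finset.mem_Ico.mp l.2).2

/-- The single-token marginal at the last coordinate of a distribution on `𝒳^{M+1}`. -/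
noncomputable def tokenMarg (d M : ℕ) (μb : (Fin (M + 1) → Fin d) → ℝ) (e : Fin d) : ℝ :=
  ∑ y : Fin (M + 1) → Fin d, if y ⟨M, Nat.lt_succ_self M⟩ = e then μb y else 0

/-!
The integrand of `A` is a kernel evaluated at the histories of the positions `l` and `L`. Expanding
it over tokens turns it into a sum of products of a feature of the first history and a feature of
the second one. If the chain were stationary with independent histories at `l` and `L`, the
expectation of each product would factor and `B` would come out exactly. Two errors remain.

* *Burn-in*: the law of the window at time `l - M` differs from `μ` by at most `λ ^ (l - M) √D₀` in
  the norm of `L²(1/μ)`.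
* *Correlation*: by the Markov property the conditional expectation of the second feature depends
  on the first history only through its last window, and this dependence shrinks like the power of
  `λ` given by the gap between the two histories.

Both come from the same fact: a spectral gap means that the transition matrix contracts vectors of
total mass zero in `L²(1/μ)`. The features are combined by Cauchy-Schwarz *before* taking square
roots, so their number does not enter: an attention vector is a probability vector, hence of norm at
most one, and only the factor `1 / γ` of the centred indicators `1{x = k} / q k - 1` survives. The
errors sum to geometric series over `l`, except for at most `M` late positions whose history
overlaps that of `L`; those are bounded trivially.
-/

section ChiSquareContraction

open scoped Matrix

variable {Ω : Type*} [Fintype Ω]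

theorem sum_abs_le_sqrt_sum_sq_div {μ : Ω → ℝ} (hμ : ∀ ω, 0 < μ ω) (hμ1 : ∑ ω, μ ω = 1)
    (ν : Ω → ℝ) : ∑ ω, |ν ω| ≤ √(∑ ω, ν ω ^ 2 / μ ω) := by
  refine Real.le_sqrt_of_sq_le ?_
  simpa only [sq_abs, hμ1, div_one] using
    sq_sum_div_le_sum_sq_div univ (fun ω => |ν ω|) (fun ω _ => hμ ω)

theorem sum_sq_sub_mass_mul_div_le {μ : Ω → ℝ} (hμ : ∀ ω, 0 < μ ω) (hμ1 : ∑ ω, μ ω = 1)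
    (ν : Ω → ℝ) :
    ∑ ω, (ν ω - (∑ ω', ν ω') * μ ω) ^ 2 / μ ω ≤ ∑ ω, ν ω ^ 2 / μ ω := by
  set m := ∑ ω, ν ω with hm
  have expand : ∀ ω, (ν ω - m * μ ω) ^ 2 / μ ω = ν ω ^ 2 / μ ω - 2 * m * ν ω + m ^ 2 * μ ω :=
    fun ω => by have := (hμ ω).ne'; field_simp; ring
  simp only [expand, sum_add_distrib, sum_sub_distrib, ← mul_sum, hμ1, ← hm]
  nlinarith [sq_nonneg m]

theorem sum_mulVec_of_colSum_eq_one {P : Matrix Ω Ω ℝ} (hP : ∀ ω, ∑ ω', P ω' ω = 1) (ν : Ω → ℝ) :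
    ∑ ω, (P *ᵥ ν) ω = ∑ ω, ν ω := by
  simp only [Matrix.mulVec, dotProduct]
  rw [sum_comm]
  simp only [← sum_mul, hP, one_mul]

/-- The matrix `diag(√μ)⁻¹ P diag(√μ) - √μ (√μ)ᵀ`, of which `specA` is the case of the window
transition matrix. As a map of `ℓ²` it is the action of `P` on `L²(1/μ)` with the direction `μ`
removed. -/
noncomputable def spectralResidual [DecidableEq Ω] (P : Matrix Ω Ω ℝ) (μ : Ω → ℝ) :
    Matrix Ω Ω ℝ :=
  (Matrix.diagonal fun ω => (√(μ ω))⁻¹) * P * (Matrix.diagonal fun ω => √(μ ω)) -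
    Matrix.vecMulVec (fun ω => √(μ ω)) (fun ω => √(μ ω))

variable [DecidableEq Ω] {P : Matrix Ω Ω ℝ} {μ : Ω → ℝ} {lam : ℝ}

theorem spectralResidual_mulVec_inv_sqrt_mul (hμ : ∀ ω, 0 < μ ω) {ν : Ω → ℝ}
    (hν : ∑ ω, ν ω = 0) :
    spectralResidual P μ *ᵥ (fun ω => (√(μ ω))⁻¹ * ν ω) = fun ω => (√(μ ω))⁻¹ * (P *ᵥ ν) ω := by
  have cancel : ∀ ω, √(μ ω) * ((√(μ ω))⁻¹ * ν ω) = ν ω := fun ω =>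
    mul_inv_cancel_left₀ (Real.sqrt_pos.mpr (hμ ω)).ne' _
  have hdiag : (Matrix.diagonal fun ω => √(μ ω)) *ᵥ (fun ω => (√(μ ω))⁻¹ * ν ω) = ν := by
    funext ω
    rw [Matrix.mulVec_diagonal, cancel]
  funext ω
  simp only [spectralResidual, Matrix.sub_mulVec, ← Matrix.mulVec_mulVec, hdiag, Pi.sub_apply,
    Matrix.mulVec_diagonal, Matrix.vecMulVec_mulVec, dotProduct, cancel, hν, MulOpposite.op_zero,
    zero_smul, Pi.zero_apply, sub_zero]

theorem sum_sq_div_mulVec_le (hμ : ∀ ω, 0 < μ ω)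
    (hop : ∀ v, √(∑ ω, (spectralResidual P μ *ᵥ v) ω ^ 2) ≤ lam * √(∑ ω, v ω ^ 2))
    {ν : Ω → ℝ} (hν : ∑ ω, ν ω = 0) :
    ∑ ω, (P *ᵥ ν) ω ^ 2 / μ ω ≤ lam ^ 2 * ∑ ω, ν ω ^ 2 / μ ω := by
  have norm_sq : ∀ u : Ω → ℝ, ∑ ω, ((√(μ ω))⁻¹ * u ω) ^ 2 = ∑ ω, u ω ^ 2 / μ ω := fun u => by
    simp only [mul_pow, inv_pow, Real.sq_sqrt (hμ _).le, div_eq_inv_mul]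
  have nonneg : ∀ u : Ω → ℝ, 0 ≤ ∑ ω, u ω ^ 2 / μ ω := fun u =>
    sum_nonneg fun ω _ => div_nonneg (sq_nonneg _) (hμ ω).le
  have h := pow_le_pow_left₀ (Real.sqrt_nonneg _) (hop fun ω => (√(μ ω))⁻¹ * ν ω) 2
  rwa [spectralResidual_mulVec_inv_sqrt_mul hμ hν, mul_pow, norm_sq, norm_sq,
    Real.sq_sqrt (nonneg _), Real.sq_sqrt (nonneg _)] at h

theorem sum_sq_div_pow_mulVec_le (hμ : ∀ ω, 0 < μ ω) (hP : ∀ ω, ∑ ω', P ω' ω = 1)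
    (hop : ∀ v, √(∑ ω, (spectralResidual P μ *ᵥ v) ω ^ 2) ≤ lam * √(∑ ω, v ω ^ 2))
    (s : ℕ) {ν : Ω → ℝ} (hν : ∑ ω, ν ω = 0) :
    ∑ ω, (P ^ s *ᵥ ν) ω ^ 2 / μ ω ≤ (lam ^ s) ^ 2 * ∑ ω, ν ω ^ 2 / μ ω := by
  induction s generalizing ν with
  | zero => simp
  | succ s ih =>
    rw [pow_succ, ← Matrix.mulVec_mulVec]
    calc _ ≤ (lam ^ s) ^ 2 * ∑ ω, (P *ᵥ ν) ω ^ 2 / μ ω :=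
          ih (by rw [sum_mulVec_of_colSum_eq_one hP, hν])
      _ ≤ (lam ^ s) ^ 2 * (lam ^ 2 * ∑ ω, ν ω ^ 2 / μ ω) := by
          gcongr
          exact sum_sq_div_mulVec_le hμ hop hν
      _ = (lam ^ (s + 1)) ^ 2 * ∑ ω, ν ω ^ 2 / μ ω := by ring

theorem pow_mulVec_eq_self {v : Ω → ℝ} (hv : P *ᵥ v = v) (s : ℕ) : P ^ s *ᵥ v = v := by
  induction s with
  | zero => simp
  | succ s ih => rw [pow_succ, ← Matrix.mulVec_mulVec, hv, ih]

/-- `μ` is a stationary probability vector of full support for `P`, and `P` contracts the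
signed vectors of mass zero by the factor `lam` in `L²(1/μ)`. -/
structure HasSpectralGap (P : Matrix Ω Ω ℝ) (μ : Ω → ℝ) (lam : ℝ) : Prop where
  pos : ∀ ω, 0 < μ ω
  sum_eq_one : ∑ ω, μ ω = 1
  mulVec_eq_self : P *ᵥ μ = μ
  residual_le : ∀ v, √(∑ ω, (spectralResidual P μ *ᵥ v) ω ^ 2) ≤ lam * √(∑ ω, v ω ^ 2)

theorem HasSpectralGap.sum_abs_pow_mulVec_sub_le (h : HasSpectralGap P μ lam) (hlam : 0 ≤ lam)
    (hP : ∀ ω, ∑ ω', P ω' ω = 1) {ν : Ω → ℝ} (hν1 : ∑ ω, ν ω = 1) (s : ℕ) :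
    ∑ ω, |(P ^ s *ᵥ ν) ω - μ ω| ≤ lam ^ s * √(chiSq ν μ) := by
  have hsub : P ^ s *ᵥ (ν - μ) = P ^ s *ᵥ ν - μ := by
    rw [Matrix.mulVec_sub, pow_mulVec_eq_self h.mulVec_eq_self]
  have hmass : ∑ ω, (ν - μ) ω = 0 := by simp [hν1, h.sum_eq_one]
  calc ∑ ω, |(P ^ s *ᵥ ν) ω - μ ω| ≤ √(∑ ω, (P ^ s *ᵥ (ν - μ)) ω ^ 2 / μ ω) := by
        simpa only [hsub, Pi.sub_apply] using
          sum_abs_le_sqrt_sum_sq_div h.pos h.sum_eq_one (P ^ s *ᵥ (ν - μ))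
    _ ≤ √((lam ^ s) ^ 2 * chiSq ν μ) :=
        Real.sqrt_le_sqrt (sum_sq_div_pow_mulVec_le h.pos hP h.residual_le s hmass)
    _ = lam ^ s * √(chiSq ν μ) := by
        rw [Real.sqrt_mul (sq_nonneg _), Real.sqrt_sq (pow_nonneg hlam s)]

theorem HasSpectralGap.sq_sum_sum_pow_mulVec_mul_sub_le {τ : Type*} [Fintype τ]
    (h : HasSpectralGap P μ lam) (hP : ∀ ω, ∑ ω', P ω' ω = 1) (ν f : τ → Ω → ℝ) (s : ℕ) :
    (∑ t, ∑ ω, (P ^ s *ᵥ ν t) ω * f t ω - ∑ t, (∑ ω, ν t ω) * ∑ ω, μ ω * f t ω) ^ 2 ≤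
      (lam ^ s) ^ 2 * (∑ t, ∑ ω, ν t ω ^ 2 / μ ω) * ∑ t, ∑ ω, μ ω * f t ω ^ 2 := by
  set δ : τ → Ω → ℝ := fun t => ν t - (∑ ω, ν t ω) • μ
  have hδ (t) : ∑ ω, δ t ω = 0 := by
    simp [δ, ← mul_sum, h.sum_eq_one]
  have hpow (t) : P ^ s *ᵥ δ t = P ^ s *ᵥ ν t - (∑ ω, ν t ω) • μ := by
    rw [Matrix.mulVec_sub, Matrix.mulVec_smul, pow_mulVec_eq_self h.mulVec_eq_self]
  have hcov : ∑ t, ∑ ω, (P ^ s *ᵥ ν t) ω * f t ω - ∑ t, (∑ ω, ν t ω) * ∑ ω, μ ω * f t ω =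
      ∑ t, ∑ ω, (P ^ s *ᵥ δ t) ω * f t ω := by
    simp only [hpow, Pi.sub_apply, Pi.smul_apply, smul_eq_mul, sub_mul, sum_sub_distrib, mul_sum,
      mul_assoc]
  calc _ ≤ (∑ t, ∑ ω, (P ^ s *ᵥ δ t) ω ^ 2 / μ ω) * ∑ t, ∑ ω, μ ω * f t ω ^ 2 := by
        rw [hcov]
        simp only [← sum_product']
        refine sum_sq_le_sum_mul_sum_of_sq_le_mul _
          (fun x _ => div_nonneg (sq_nonneg _) (h.pos x.2).le)
          (fun x _ => mul_nonneg (h.pos x.2).le (sq_nonneg _)) fun x _ => ?_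
        have := (h.pos x.2).ne'
        exact le_of_eq (by field_simp)
    _ ≤ _ := by
        refine mul_le_mul_of_nonneg_right ?_
          (sum_nonneg fun t _ => sum_nonneg fun ω _ => mul_nonneg (h.pos ω).le (sq_nonneg _))
        rw [mul_sum]
        refine sum_le_sum fun t _ =>
          (sum_sq_div_pow_mulVec_le h.pos hP h.residual_le s (hδ t)).trans ?_
        exact mul_le_mul_of_nonneg_left (sum_sq_sub_mass_mul_div_le h.pos h.sum_eq_one (ν t))
          (sq_nonneg _)

end ChiSquareContraction

section Sequences

/-- The infinite sequence continuing `x` by zeros. Extending lets sequences of all lengths share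
one type; only the first `T` terms carry information. -/
def extendSeq {α : Type*} [Zero α] {T : ℕ} (x : Fin T → α) : ℕ → α :=
  fun i => if h : i < T then x ⟨i, h⟩ else 0

/-- The sequence `X` with its first `s` terms removed. -/
def shiftSeq {α : Type*} (s : ℕ) (X : ℕ → α) : ℕ → α := fun i => X (s + i)

/-- The block of `R` consecutive terms of `X` starting at position `s`. -/
def window {α : Type*} (R s : ℕ) (X : ℕ → α) : Fin R → α := fun i => X (s + i)

variable {α : Type*}

theorem extendSeq_of_lt [Zero α] {T : ℕ} (x : Fin T → α) {i : ℕ} (h : i < T) :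
    extendSeq x i = x ⟨i, h⟩ := dif_pos h

theorem extendSeq_snoc [Zero α] {T : ℕ} (x : Fin T → α) (e : α) :
    extendSeq (Fin.snoc x e : Fin (T + 1) → α) = Function.update (extendSeq x) T e := by
  funext i
  rcases lt_trichotomy i T with h | rfl | h
  · simp [extendSeq, Fin.snoc, h, h.ne, Nat.lt_succ_of_lt h]
  · simp [extendSeq, Fin.snoc]
  · simp [extendSeq, h.ne', h.not_gt, (Nat.succ_le_of_lt h).not_gt]

theorem window_zero_extendSeq [Zero α] {R : ℕ} (Z : Fin R → α) :
    window R 0 (extendSeq Z) = Z := by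
  funext i
  simp [window, extendSeq]

theorem extendSeq_window_extendSeq [Zero α] {R s : ℕ} (x : Fin (R + s) → α) :
    extendSeq (window R s (extendSeq x)) = shiftSeq s (extendSeq x) := by
  funext i
  by_cases h : i < R
  · rw [extendSeq_of_lt _ h]
    rfl
  · have : ¬ s + i < R + s := by omega
    simp [extendSeq, shiftSeq, h, this]

theorem shiftSeq_zero (X : ℕ → α) : shiftSeq 0 X = X :=
  funext fun i => congrArg X (Nat.zero_add i)

theorem shiftSeq_shiftSeq (s t : ℕ) (X : ℕ → α) :
    shiftSeq t (shiftSeq s X) = shiftSeq (s + t) X := by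
  funext i
  simp only [shiftSeq, Nat.add_assoc]

theorem shiftSeq_update (s t : ℕ) (X : ℕ → α) (e : α) :
    shiftSeq s (Function.update X (s + t) e) = Function.update (shiftSeq s X) t e := by
  funext i
  simp [shiftSeq, Function.update_apply]

theorem window_succ_update_eq_iff {R : ℕ} (hR : 0 < R) (s : ℕ) (X : ℕ → α) (e : α)
    (Z : Fin R → α) :
    window R (s + 1) (Function.update X (R + s) e) = Z ↔
      (∀ i : Fin (R - 1), Z ⟨i, by omega⟩ = window R s X ⟨i + 1, by omega⟩) ∧
        e = Z ⟨R - 1, by omega⟩ := by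
  obtain ⟨R, rfl⟩ := Nat.exists_eq_succ_of_ne_zero hR.ne'
  rw [funext_iff, Fin.forall_fin_succ']
  refine and_congr (forall_congr' fun i => ?_) ?_
  · have hne : s + 1 + (i : ℕ) ≠ R.succ + s := by omega
    rw [window, Fin.val_castSucc, Function.update_of_ne hne, eq_comm, Nat.add_assoc,
      Nat.add_comm 1]
    rfl
  · have heq : s + 1 + R = R.succ + s := by omega
    simp only [window, Fin.val_last, heq, Function.update_self]
    rfl

theorem dependsOn_Iio_update {β : Type*} {F : (ℕ → α) → β} {t : ℕ}
    (hF : DependsOn F (Set.Iio t)) (X : ℕ → α) (e : α) : F (Function.update X t e) = F X :=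
  hF fun _ hi => Function.update_of_ne (ne_of_lt hi) _ _

end Sequences

section OneStep

variable {κ α : Type*} [Fintype α] (r : κ → ℕ) (pk : (κ → α) → α → ℝ)

/-- The conditional expectation of `F` when the token at position `t` is resampled from the
kernel `pk` given its parents and all other tokens are kept. -/
def stepAvg (t : ℕ) (F : (ℕ → α) → ℝ) (X : ℕ → α) : ℝ :=
  ∑ e, pk (fun k => X (t - r k)) e * F (Function.update X t e)

variable {r pk}

theorem stepAvg_mul_left {t : ℕ} {a : (ℕ → α) → ℝ} (ha : DependsOn a (Set.Iio t))
    (F : (ℕ → α) → ℝ) (X : ℕ → α) :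
    stepAvg r pk t (fun X => a X * F X) X = a X * stepAvg r pk t F X := by
  simp only [stepAvg, dependsOn_Iio_update ha, mul_sum, mul_left_comm]

theorem stepAvg_const (hpk1 : ∀ Y, ∑ e, pk Y e = 1) (t : ℕ) (c : ℝ) :
    stepAvg r pk t (fun _ => c) = fun _ => c := by
  funext X
  simp only [stepAvg, ← sum_mul, hpk1, one_mul]

theorem stepAvg_comp_shiftSeq {R : ℕ} (hrR : ∀ i, r i ≤ R) {t : ℕ} (ht : R ≤ t) (s : ℕ)
    (F : (ℕ → α) → ℝ) (X : ℕ → α) :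
    stepAvg r pk (s + t) (fun X => F (shiftSeq s X)) X = stepAvg r pk t F (shiftSeq s X) := by
  have parents : ∀ k, s + t - r k = s + (t - r k) := fun k =>
    Nat.add_sub_assoc ((hrR k).trans ht) s
  simp only [stepAvg, shiftSeq_update, parents]
  rfl

theorem stepAvg_window_eq {d n R : ℕ} (hR : 0 < R) {r : Fin n → ℕ} (hrpos : ∀ k, 0 < r k)
    (hrR : ∀ i, r i ≤ R) (pk : (Fin n → Fin d) → Fin d → ℝ) (s : ℕ) (Z' : Fin R → Fin d)
    (X : ℕ → Fin d) :
    stepAvg r pk (R + s) (fun X => if window R (s + 1) X = Z' then 1 else 0) X =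
      windowMatrix d n R hR r hrpos pk Z' (window R s X) := by
  have parents : ∀ k, R + s - r k = s + (R - r k) := fun k => by have := hrR k; omega
  simp only [stepAvg, window_succ_update_eq_iff hR, windowMatrix, Matrix.of_apply, parents,
    ite_and, mul_ite, mul_one, mul_zero]
  split_ifs
  · simp [window]
  · simp

theorem sum_windowMatrix {d n R : ℕ} [NeZero d] (hR : 0 < R) {r : Fin n → ℕ}
    (hrpos : ∀ k, 0 < r k) (hrR : ∀ i, r i ≤ R) {pk : (Fin n → Fin d) → Fin d → ℝ}
    (hpk1 : ∀ Y, ∑ e, pk Y e = 1) (Z : Fin R → Fin d) :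
    ∑ Z', windowMatrix d n R hR r hrpos pk Z' Z = 1 := by
  rw [← window_zero_extendSeq Z]
  simp only [← stepAvg_window_eq hR hrpos hrR]
  simp only [stepAvg]
  rw [sum_comm]
  simp [hpk1]

end OneStep

section Expectation

theorem ngramProb_nonneg {d n R : ℕ} {r : Fin n → ℕ}
    {pk : (Fin n → Fin d) → Fin d → ℝ} (hpk0 : ∀ Y e, 0 ≤ pk Y e) {η : (Fin R → Fin d) → ℝ}
    (hη : 0 ≤ η) {T : ℕ} (hRT : R ≤ T) (x : Fin T → Fin d) :
    0 ≤ ngramProb d n R T r pk η hRT x :=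
  mul_nonneg (hη _) (prod_nonneg fun _ _ => hpk0 _ _)

variable {d n R : ℕ} [NeZero d] {r : Fin n → ℕ} {pk : (Fin n → Fin d) → Fin d → ℝ}

theorem ngramProb_eq_prod {T : ℕ} (hRT : R ≤ T) (η : (Fin R → Fin d) → ℝ) (x : Fin T → Fin d) :
    ngramProb d n R T r pk η hRT x =
      η (window R 0 (extendSeq x)) *
        ∏ l ∈ Ico R T, pk (fun k => extendSeq x (l - r k)) (extendSeq x l) := by
  rw [ngramProb, ← prod_attach (Ico R T)]
  congr 1
  · congr 1
    funext i
    rw [window, zero_add, extendSeq_of_lt]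
  · refine prod_congr rfl fun l _ => ?_
    have hl : l.1 < T := (mem_Ico.mp l.2).2
    rw [extendSeq_of_lt x hl]
    congr 1
    funext k
    rw [extendSeq_of_lt x ((Nat.sub_le _ _).trans_lt hl)]

theorem ngramProb_snoc (hrpos : ∀ k, 0 < r k) {T : ℕ} (hT : 0 < T) (hRT : R ≤ T)
    (η : (Fin R → Fin d) → ℝ) (x : Fin T → Fin d) (e : Fin d) :
    ngramProb d n R (T + 1) r pk η (hRT.trans T.le_succ) (Fin.snoc x e : Fin (T + 1) → Fin d) =
      ngramProb d n R T r pk η hRT x * pk (fun k => extendSeq x (T - r k)) e := by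
  have past {l : ℕ} (hl : l < T) : Function.update (extendSeq x) T e l = extendSeq x l :=
    Function.update_of_ne hl.ne _ _
  have hwindow : window R 0 (Function.update (extendSeq x) T e) = window R 0 (extendSeq x) :=
    funext fun i => past (by omega)
  have hpast : ∀ l ∈ Ico R T,
      pk (fun k => Function.update (extendSeq x) T e (l - r k))
          (Function.update (extendSeq x) T e l) =
        pk (fun k => extendSeq x (l - r k)) (extendSeq x l) := fun l hl => by
    have hlT := (mem_Ico.mp hl).2
    simp only [past hlT, past ((Nat.sub_le l _).trans_lt hlT)]
  simp only [ngramProb_eq_prod, extendSeq_snoc, prod_Ico_succ_top hRT, hwindow,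
    prod_congr rfl hpast, Function.update_self, past (Nat.sub_lt hT (hrpos _)), mul_assoc]

/-- The expectation of `F` under the `n`-gram chain of length `R + j` started from `η`. The
initial weights `η` may be signed, and `F` sees the sequence extended by zeros. -/
noncomputable def ngramExp (r : Fin n → ℕ) (pk : (Fin n → Fin d) → Fin d → ℝ)
    (η : (Fin R → Fin d) → ℝ) (j : ℕ) (F : (ℕ → Fin d) → ℝ) : ℝ :=
  ∑ x : Fin (R + j) → Fin d,
    ngramProb d n R (R + j) r pk η (Nat.le_add_right R j) x * F (extendSeq x)

theorem ngramExp_zero (η : (Fin R → Fin d) → ℝ) (F : (ℕ → Fin d) → ℝ) :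
    ngramExp r pk η 0 F = ∑ Z, η Z * F (extendSeq Z) := by
  refine sum_congr rfl fun Z _ => ?_
  rw [ngramProb_eq_prod]
  simp only [Nat.add_zero, Ico_self, prod_empty, mul_one, window_zero_extendSeq]

theorem ngramExp_succ (hR : 0 < R) (hrpos : ∀ k, 0 < r k) (η : (Fin R → Fin d) → ℝ) (j : ℕ)
    (F : (ℕ → Fin d) → ℝ) :
    ngramExp r pk η (j + 1) F = ngramExp r pk η j (stepAvg r pk (R + j) F) := by
  refine ((Fin.snocEquiv fun _ : Fin (R + j + 1) => Fin d).sum_comp _).symm.trans ?_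
  rw [Fintype.sum_prod_type, sum_comm]
  refine sum_congr rfl fun x _ => ?_
  rw [stepAvg, mul_sum]
  refine sum_congr rfl fun e _ => ?_
  rw [← mul_assoc, ← ngramProb_snoc hrpos (Nat.add_pos_left hR j), ← extendSeq_snoc]
  rfl

theorem ngramExp_sum {τ : Type*} (s : Finset τ) (η : (Fin R → Fin d) → ℝ) (j : ℕ)
    (F : τ → (ℕ → Fin d) → ℝ) :
    ngramExp r pk η j (fun X => ∑ t ∈ s, F t X) = ∑ t ∈ s, ngramExp r pk η j (F t) := by
  simp only [ngramExp, mul_sum]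
  exact sum_comm

theorem ngramExp_mul_const (η : (Fin R → Fin d) → ℝ) (j : ℕ) (F : (ℕ → Fin d) → ℝ) (c : ℝ) :
    ngramExp r pk η j (fun X => F X * c) = ngramExp r pk η j F * c := by
  simp only [ngramExp, sum_mul, mul_assoc]

theorem ngramExp_const (hR : 0 < R) (hrpos : ∀ k, 0 < r k) (hpk1 : ∀ Y, ∑ e, pk Y e = 1)
    (η : (Fin R → Fin d) → ℝ) (j : ℕ) (c : ℝ) :
    ngramExp r pk η j (fun _ => c) = (∑ Z, η Z) * c := by
  induction j with
  | zero => rw [ngramExp_zero, sum_mul]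
  | succ j ih => rw [ngramExp_succ hR hrpos, stepAvg_const hpk1, ih]

theorem ngramExp_mono (hpk0 : ∀ Y e, 0 ≤ pk Y e) {η : (Fin R → Fin d) → ℝ} (hη : 0 ≤ η)
    (j : ℕ) {F G : (ℕ → Fin d) → ℝ} (h : ∀ X, F X ≤ G X) :
    ngramExp r pk η j F ≤ ngramExp r pk η j G :=
  sum_le_sum fun x _ => mul_le_mul_of_nonneg_left (h _) (ngramProb_nonneg hpk0 hη _ x)

theorem sq_ngramExp_mul_le (hpk0 : ∀ Y e, 0 ≤ pk Y e) {η : (Fin R → Fin d) → ℝ}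
    (hη : 0 ≤ η) (j : ℕ) (F G : (ℕ → Fin d) → ℝ) :
    ngramExp r pk η j (fun X => F X * G X) ^ 2 ≤
      ngramExp r pk η j (fun X => F X ^ 2) * ngramExp r pk η j (fun X => G X ^ 2) :=
  have hp x := ngramProb_nonneg (r := r) hpk0 hη (Nat.le_add_right R j) x
  sum_sq_le_sum_mul_sum_of_sq_le_mul _ (fun x _ => mul_nonneg (hp x) (sq_nonneg _))
    (fun x _ => mul_nonneg (hp x) (sq_nonneg _)) fun x _ => le_of_eq (by ring)

end Expectation

section MarkovProperty

open scoped Matrix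

variable {d n R : ℕ} [NeZero d] {r : Fin n → ℕ} {pk : (Fin n → Fin d) → Fin d → ℝ}

/-- The law of the window at position `s` weighted by the functional `a`, that is
`Z ↦ E[a · 1{window at s = Z}]`, for the chain started from `η`. -/
noncomputable def windowLaw (r : Fin n → ℕ) (pk : (Fin n → Fin d) → Fin d → ℝ)
    (η : (Fin R → Fin d) → ℝ) (s : ℕ) (a : (ℕ → Fin d) → ℝ) (Z : Fin R → Fin d) : ℝ :=
  ngramExp r pk η s fun X => a X * if window R s X = Z then 1 else 0

theorem ngramExp_mul_comp_window (η : (Fin R → Fin d) → ℝ) (s : ℕ) (a : (ℕ → Fin d) → ℝ)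
    (c : (Fin R → Fin d) → ℝ) :
    ngramExp r pk η s (fun X => a X * c (window R s X)) =
      ∑ Z, windowLaw r pk η s a Z * c Z := by
  simp only [windowLaw, ← ngramExp_mul_const, ← ngramExp_sum]
  simp

theorem sum_windowLaw (η : (Fin R → Fin d) → ℝ) (s : ℕ) (a : (ℕ → Fin d) → ℝ) :
    ∑ Z, windowLaw r pk η s a Z = ngramExp r pk η s a := by
  simpa only [mul_one] using (ngramExp_mul_comp_window η s a fun _ => 1).symm

theorem windowLaw_zero_one (η : (Fin R → Fin d) → ℝ) :
    windowLaw r pk η 0 (fun _ => 1) = η := by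
  funext Z
  simp only [windowLaw, ngramExp_zero, window_zero_extendSeq]
  simp

theorem windowLaw_succ (hR : 0 < R) (hrpos : ∀ k, 0 < r k) (hrR : ∀ k, r k ≤ R)
    (η : (Fin R → Fin d) → ℝ) {s : ℕ} {a : (ℕ → Fin d) → ℝ} (ha : DependsOn a (Set.Iio (R + s))) :
    windowLaw r pk η (s + 1) a =
      windowMatrix d n R hR r hrpos pk *ᵥ windowLaw r pk η s a := by
  funext Z'
  rw [windowLaw, ngramExp_succ hR hrpos]
  simp only [funext (stepAvg_mul_left ha _), stepAvg_window_eq hR hrpos hrR,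
    ngramExp_mul_comp_window, Matrix.mulVec, dotProduct, mul_comm]

theorem windowLaw_add (hR : 0 < R) (hrpos : ∀ k, 0 < r k) (hrR : ∀ k, r k ≤ R)
    (η : (Fin R → Fin d) → ℝ) {s : ℕ} {a : (ℕ → Fin d) → ℝ} (ha : DependsOn a (Set.Iio (R + s)))
    (m : ℕ) :
    windowLaw r pk η (s + m) a =
      windowMatrix d n R hR r hrpos pk ^ m *ᵥ windowLaw r pk η s a := by
  induction m with
  | zero => rw [pow_zero, Matrix.one_mulVec, Nat.add_zero]
  | succ m ih =>
    have ha' : DependsOn a (Set.Iio (R + (s + m))) :=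
      ha.mono (Set.Iio_subset_Iio (by omega))
    rw [← Nat.add_assoc, windowLaw_succ hR hrpos hrR η ha', ih, Matrix.mulVec_mulVec, pow_succ']

theorem windowLaw_one (hR : 0 < R) (hrpos : ∀ k, 0 < r k) (hrR : ∀ k, r k ≤ R)
    (η : (Fin R → Fin d) → ℝ) (s : ℕ) :
    windowLaw r pk η s (fun _ => 1) = windowMatrix d n R hR r hrpos pk ^ s *ᵥ η := by
  simpa only [Nat.zero_add, windowLaw_zero_one] using
    windowLaw_add hR hrpos hrR η (s := 0) ((dependsOn_const 1).mono (Set.empty_subset _)) s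

theorem ngramExp_mul_comp_shiftSeq (hR : 0 < R) (hrpos : ∀ k, 0 < r k) (hrR : ∀ k, r k ≤ R)
    (η : (Fin R → Fin d) → ℝ) {s : ℕ} {a : (ℕ → Fin d) → ℝ} (ha : DependsOn a (Set.Iio (R + s)))
    (j : ℕ) (F : (ℕ → Fin d) → ℝ) :
    ngramExp r pk η (s + j) (fun X => a X * F (shiftSeq s X)) =
      ∑ Z, windowLaw r pk η s a Z * ngramExp r pk (Pi.single Z 1) j F := by
  induction j generalizing F with
  | zero =>
    simp only [Nat.add_zero, ngramExp_zero, Pi.single_apply, ite_mul, one_mul, zero_mul,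
      sum_ite_eq', mem_univ, if_true, ← ngramExp_mul_comp_window]
    simp only [ngramExp, extendSeq_window_extendSeq]
  | succ j ih =>
    have ha' : DependsOn a (Set.Iio (R + (s + j))) :=
      ha.mono (Set.Iio_subset_Iio (by omega))
    have hstep : stepAvg r pk (R + (s + j)) (fun X => a X * F (shiftSeq s X)) =
        fun X => a X * stepAvg r pk (R + j) F (shiftSeq s X) := by
      funext X
      rw [stepAvg_mul_left ha', Nat.add_left_comm, stepAvg_comp_shiftSeq hrR (Nat.le_add_right R j)]
    rw [← Nat.add_assoc, ngramExp_succ hR hrpos, hstep, ih]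
    simp only [ngramExp_succ hR hrpos]

theorem ngramExp_comp_shiftSeq (hR : 0 < R) (hrpos : ∀ k, 0 < r k) (hrR : ∀ k, r k ≤ R)
    (η : (Fin R → Fin d) → ℝ) (s j : ℕ) (F : (ℕ → Fin d) → ℝ) :
    ngramExp r pk η (s + j) (fun X => F (shiftSeq s X)) =
      ∑ Z, (windowMatrix d n R hR r hrpos pk ^ s *ᵥ η) Z * ngramExp r pk (Pi.single Z 1) j F := by
  simpa only [one_mul, windowLaw_one hR hrpos hrR] using
    ngramExp_mul_comp_shiftSeq hR hrpos hrR η (s := s)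
      ((dependsOn_const 1).mono (Set.empty_subset _)) j F

theorem ngramExp_eq_sum_single (hR : 0 < R) (hrpos : ∀ k, 0 < r k) (hrR : ∀ k, r k ≤ R)
    (η : (Fin R → Fin d) → ℝ) (j : ℕ) (F : (ℕ → Fin d) → ℝ) :
    ngramExp r pk η j F = ∑ Z, η Z * ngramExp r pk (Pi.single Z 1) j F := by
  simpa [shiftSeq_zero] using ngramExp_comp_shiftSeq (pk := pk) hR hrpos hrR η 0 j F

end MarkovProperty

section Decorrelation

open scoped Matrix

variable {d n R : ℕ} [NeZero d] {r : Fin n → ℕ} {pk : (Fin n → Fin d) → Fin d → ℝ}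
  {μ : (Fin R → Fin d) → ℝ} {lam : ℝ}

theorem sum_sq_windowLaw_div_le (hR : 0 < R) (hrpos : ∀ k, 0 < r k) (hrR : ∀ k, r k ≤ R)
    (hpk0 : ∀ Y e, 0 ≤ pk Y e) (hμ : ∀ Z, 0 < μ Z)
    (hstat : windowMatrix d n R hR r hrpos pk *ᵥ μ = μ) (s : ℕ) (a : (ℕ → Fin d) → ℝ) :
    ∑ Z, windowLaw r pk μ s a Z ^ 2 / μ Z ≤ ngramExp r pk μ s fun X => a X ^ 2 := by
  rw [← sum_windowLaw μ s fun X => a X ^ 2]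
  refine sum_le_sum fun Z _ => (div_le_iff₀ (hμ Z)).mpr ?_
  have hlaw : windowLaw r pk μ s (fun _ => 1) Z = μ Z := by
    rw [windowLaw_one hR hrpos hrR, pow_mulVec_eq_self hstat]
  have hidem (X) : (if window R s X = Z then (1 : ℝ) else 0) ^ 2 =
      if window R s X = Z then 1 else 0 := by simp
  have hcs := sq_ngramExp_mul_le (r := r) hpk0 (fun Z => (hμ Z).le) s
    (fun X => a X * if window R s X = Z then 1 else 0) (fun X => if window R s X = Z then 1 else 0)
  simp only [mul_assoc, mul_pow, ← sq, hidem] at hcs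
  simpa only [windowLaw, ← hlaw, one_mul] using hcs

theorem sq_ngramExp_le (hR : 0 < R) (hrpos : ∀ k, 0 < r k) (hpk0 : ∀ Y e, 0 ≤ pk Y e)
    (hpk1 : ∀ Y, ∑ e, pk Y e = 1) {η : (Fin R → Fin d) → ℝ} (hη : 0 ≤ η)
    (hη1 : ∑ Z, η Z = 1) (j : ℕ) (F : (ℕ → Fin d) → ℝ) :
    ngramExp r pk η j F ^ 2 ≤ ngramExp r pk η j fun X => F X ^ 2 := by
  simpa [ngramExp_const hR hrpos hpk1, hη1] using
    sq_ngramExp_mul_le (r := r) hpk0 hη j F fun _ => 1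

theorem abs_ngramExp_le (hR : 0 < R) (hrpos : ∀ k, 0 < r k) (hpk0 : ∀ Y e, 0 ≤ pk Y e)
    (hpk1 : ∀ Y, ∑ e, pk Y e = 1) {η : (Fin R → Fin d) → ℝ} (hη : 0 ≤ η)
    (hη1 : ∑ Z, η Z = 1) (j : ℕ) {F : (ℕ → Fin d) → ℝ} {C : ℝ} (hF : ∀ X, |F X| ≤ C) :
    |ngramExp r pk η j F| ≤ C := by
  have hconst (c) : ngramExp r pk η j (fun _ => c) = c := by
    rw [ngramExp_const hR hrpos hpk1, hη1, one_mul]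
  refine abs_le.mpr ⟨?_, ?_⟩
  · exact (hconst (-C)).symm.trans_le (ngramExp_mono hpk0 hη j fun X => (abs_le.mp (hF X)).1)
  · exact (ngramExp_mono hpk0 hη j fun X => (abs_le.mp (hF X)).2).trans_eq (hconst C)

theorem abs_sum_mul_le_sqrt_mul {τ : Type*} [Fintype τ] {x y : τ → ℝ} {Ca Cb : ℝ}
    (hx : ∑ t, x t ^ 2 ≤ Ca) (hy : ∑ t, y t ^ 2 ≤ Cb) : |∑ t, x t * y t| ≤ √(Ca * Cb) := by
  refine Real.abs_le_sqrt ((sum_mul_sq_le_sq_mul_sq univ x y).trans ?_)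
  exact mul_le_mul hx hy (sum_nonneg fun _ _ => sq_nonneg _)
    ((sum_nonneg fun _ _ => sq_nonneg _).trans hx)

theorem sum_ngramExp_sq_le {τ : Type*} [Fintype τ] (hR : 0 < R) (hrpos : ∀ k, 0 < r k)
    (hpk0 : ∀ Y e, 0 ≤ pk Y e) (hpk1 : ∀ Y, ∑ e, pk Y e = 1) {η : (Fin R → Fin d) → ℝ}
    (hη : 0 ≤ η) (hη1 : ∑ Z, η Z = 1) (j : ℕ) {a : τ → (ℕ → Fin d) → ℝ} {C : ℝ}
    (ha : ∀ X, ∑ t, a t X ^ 2 ≤ C) : ∑ t, ngramExp r pk η j (fun X => a t X ^ 2) ≤ C := by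
  rw [← ngramExp_sum]
  refine (ngramExp_mono hpk0 hη j ha).trans_eq ?_
  rw [ngramExp_const hR hrpos hpk1, hη1, one_mul]

theorem sum_sq_ngramExp_le {τ : Type*} [Fintype τ] (hR : 0 < R) (hrpos : ∀ k, 0 < r k)
    (hpk0 : ∀ Y e, 0 ≤ pk Y e) (hpk1 : ∀ Y, ∑ e, pk Y e = 1) {η : (Fin R → Fin d) → ℝ}
    (hη : 0 ≤ η) (hη1 : ∑ Z, η Z = 1) (j : ℕ) {a : τ → (ℕ → Fin d) → ℝ} {C : ℝ}
    (ha : ∀ X, ∑ t, a t X ^ 2 ≤ C) : ∑ t, ngramExp r pk η j (a t) ^ 2 ≤ C :=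
  (sum_le_sum fun t _ => sq_ngramExp_le hR hrpos hpk0 hpk1 hη hη1 j (a t)).trans
    (sum_ngramExp_sq_le hR hrpos hpk0 hpk1 hη hη1 j ha)

theorem sum_mul_sq_ngramExp_single_le (hR : 0 < R) (hrpos : ∀ k, 0 < r k) (hrR : ∀ k, r k ≤ R)
    (hpk0 : ∀ Y e, 0 ≤ pk Y e) (hpk1 : ∀ Y, ∑ e, pk Y e = 1) {η : (Fin R → Fin d) → ℝ}
    (hη : 0 ≤ η) (j : ℕ) (F : (ℕ → Fin d) → ℝ) :
    ∑ Z, η Z * ngramExp r pk (Pi.single Z 1) j F ^ 2 ≤ ngramExp r pk η j fun X => F X ^ 2 := by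
  rw [ngramExp_eq_sum_single hR hrpos hrR η]
  exact sum_le_sum fun Z _ => mul_le_mul_of_nonneg_left
    (sq_ngramExp_le hR hrpos hpk0 hpk1 (Pi.single_nonneg.mpr zero_le_one) (by simp) j F) (hη Z)

theorem abs_ngramExp_stationary_sub_le {τ : Type*} [Fintype τ] (hR : 0 < R)
    (hrpos : ∀ k, 0 < r k) (hrR : ∀ k, r k ≤ R) (hpk0 : ∀ Y e, 0 ≤ pk Y e)
    (hpk1 : ∀ Y, ∑ e, pk Y e = 1)
    (hgap : HasSpectralGap (windowMatrix d n R hR r hrpos pk) μ lam) (hlam : 0 ≤ lam)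
    {j : ℕ} {a b : τ → (ℕ → Fin d) → ℝ} {Ca Cb : ℝ}
    (ha : ∀ t, DependsOn (a t) (Set.Iio (R + j)))
    (hCa : ∀ X, ∑ t, a t X ^ 2 ≤ Ca) (hCb : ∀ X, ∑ t, b t X ^ 2 ≤ Cb) (m : ℕ) :
    |ngramExp r pk μ (j + m + j) (fun X => ∑ t, a t X * b t (shiftSeq (j + m) X)) -
      ∑ t, ngramExp r pk μ j (a t) * ngramExp r pk μ j (b t)| ≤ √(Ca * Cb) * lam ^ m := by
  have hmarkov (t) : ngramExp r pk μ (j + m + j) (fun X => a t X * b t (shiftSeq (j + m) X)) =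
      ∑ Z, (windowMatrix d n R hR r hrpos pk ^ m *ᵥ windowLaw r pk μ j (a t)) Z *
        ngramExp r pk (Pi.single Z 1) j (b t) := by
    rw [ngramExp_mul_comp_shiftSeq hR hrpos hrR μ
      ((ha t).mono (Set.Iio_subset_Iio (by omega))), windowLaw_add hR hrpos hrR μ (ha t)]
  have hcov := hgap.sq_sum_sum_pow_mulVec_mul_sub_le
    (sum_windowMatrix hR hrpos hrR hpk1)
    (fun t => windowLaw r pk μ j (a t)) (fun t Z => ngramExp r pk (Pi.single Z 1) j (b t)) m
  simp only [← hmarkov, ← ngramExp_sum, sum_windowLaw,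
    ← ngramExp_eq_sum_single hR hrpos hrR μ j] at hcov
  have hlawsq : ∑ t, ∑ Z, windowLaw r pk μ j (a t) Z ^ 2 / μ Z ≤ Ca :=
    (sum_le_sum fun t _ => sum_sq_windowLaw_div_le hR hrpos hrR hpk0 hgap.pos
      hgap.mulVec_eq_self j (a t)).trans
      (sum_ngramExp_sq_le hR hrpos hpk0 hpk1 (fun Z => (hgap.pos Z).le) hgap.sum_eq_one j hCa)
  have hcondsq : ∑ t, ∑ Z, μ Z * ngramExp r pk (Pi.single Z 1) j (b t) ^ 2 ≤ Cb :=
    (sum_le_sum fun t _ => sum_mul_sq_ngramExp_single_le hR hrpos hrR hpk0 hpk1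
      (fun Z => (hgap.pos Z).le) j (b t)).trans
      (sum_ngramExp_sq_le hR hrpos hpk0 hpk1 (fun Z => (hgap.pos Z).le) hgap.sum_eq_one j hCb)
  have hCa0 : 0 ≤ Ca := (sum_nonneg fun _ _ => sq_nonneg _).trans (hCa 0)
  calc _ ≤ √((lam ^ m) ^ 2 * (Ca * Cb)) := by
        refine Real.abs_le_sqrt (hcov.trans ?_)
        rw [mul_assoc]
        gcongr
        exact sum_nonneg fun t _ => sum_nonneg fun Z _ => mul_nonneg (hgap.pos Z).le (sq_nonneg _)
    _ = √(Ca * Cb) * lam ^ m := by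
        rw [Real.sqrt_mul (sq_nonneg _), Real.sqrt_sq (pow_nonneg hlam m), mul_comm]

theorem abs_ngramExp_comp_shiftSeq_sub_le (hR : 0 < R)
    (hrpos : ∀ k, 0 < r k) (hrR : ∀ k, r k ≤ R) (hpk0 : ∀ Y e, 0 ≤ pk Y e)
    (hpk1 : ∀ Y, ∑ e, pk Y e = 1)
    (hgap : HasSpectralGap (windowMatrix d n R hR r hrpos pk) μ lam) (hlam : 0 ≤ lam)
    {μ0 : (Fin R → Fin d) → ℝ} (hμ01 : ∑ Z, μ0 Z = 1) (s j : ℕ) {F : (ℕ → Fin d) → ℝ} {C : ℝ}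
    (hF : ∀ X, |F X| ≤ C) :
    |ngramExp r pk μ0 (s + j) (fun X => F (shiftSeq s X)) - ngramExp r pk μ j F| ≤
      C * (lam ^ s * √(chiSq μ0 μ)) := by
  have hbound (Z : Fin R → Fin d) : |ngramExp r pk (Pi.single Z 1) j F| ≤ C :=
    abs_ngramExp_le hR hrpos hpk0 hpk1 (Pi.single_nonneg.mpr zero_le_one) (by simp) j hF
  have hC : 0 ≤ C := (abs_nonneg _).trans (hF 0)
  rw [ngramExp_comp_shiftSeq hR hrpos hrR, ngramExp_eq_sum_single hR hrpos hrR μ,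
    ← sum_sub_distrib]
  calc _ ≤ ∑ Z, |(windowMatrix d n R hR r hrpos pk ^ s *ᵥ μ0) Z - μ Z| * C := by
        refine (abs_sum_le_sum_abs _ _).trans (sum_le_sum fun Z _ => ?_)
        rw [← sub_mul, abs_mul]
        exact mul_le_mul_of_nonneg_left (hbound Z) (abs_nonneg _)
    _ ≤ C * (lam ^ s * √(chiSq μ0 μ)) := by
        rw [← sum_mul, mul_comm]
        exact mul_le_mul_of_nonneg_left (hgap.sum_abs_pow_mulVec_sub_le hlam
          (sum_windowMatrix hR hrpos hrR hpk1) hμ01 s) hC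

theorem abs_ngramExp_sum_mul_shiftSeq_sub_le {τ : Type*} [Fintype τ] (hR : 0 < R)
    (hrpos : ∀ k, 0 < r k) (hrR : ∀ k, r k ≤ R) (hpk0 : ∀ Y e, 0 ≤ pk Y e)
    (hpk1 : ∀ Y, ∑ e, pk Y e = 1)
    (hgap : HasSpectralGap (windowMatrix d n R hR r hrpos pk) μ lam) (hlam : 0 ≤ lam)
    {μ0 : (Fin R → Fin d) → ℝ} (hμ01 : ∑ Z, μ0 Z = 1)
    {j : ℕ} {a b : τ → (ℕ → Fin d) → ℝ} {Ca Cb : ℝ}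
    (ha : ∀ t, DependsOn (a t) (Set.Iio (R + j)))
    (hCa : ∀ X, ∑ t, a t X ^ 2 ≤ Ca) (hCb : ∀ X, ∑ t, b t X ^ 2 ≤ Cb) (s m : ℕ) :
    |ngramExp r pk μ0 (s + (j + m + j))
        (fun X => ∑ t, a t (shiftSeq s X) * b t (shiftSeq (s + (j + m)) X)) -
      ∑ t, ngramExp r pk μ j (a t) * ngramExp r pk μ j (b t)| ≤
      √(Ca * Cb) * (lam ^ s * √(chiSq μ0 μ) + lam ^ m) := by
  have hburnIn := abs_ngramExp_comp_shiftSeq_sub_le hR hrpos hrR hpk0 hpk1 hgap hlam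
    hμ01 s (j + m + j) (F := fun X => ∑ t, a t X * b t (shiftSeq (j + m) X))
    fun X => abs_sum_mul_le_sqrt_mul (hCa X) (hCb (shiftSeq (j + m) X))
  have hmixing := abs_ngramExp_stationary_sub_le hR hrpos hrR hpk0 hpk1 hgap hlam
    ha hCa hCb m
  simp only [shiftSeq_shiftSeq] at hburnIn
  rw [mul_add]
  exact (abs_sub_le _ _ _).trans (add_le_add hburnIn hmixing)

end Decorrelation

section Averaging

theorem sum_pow_comp_le_of_injOn {lam : ℝ} (hlam0 : 0 ≤ lam) (hlam1 : lam < 1) {s : Finset ℕ}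
    {g : ℕ → ℕ} (hg : Set.InjOn g s) : ∑ i ∈ s, lam ^ g i ≤ 1 / (1 - lam) := by
  rw [← sum_image hg, one_div, ← tsum_geometric_of_lt_one hlam0 hlam1]
  exact (summable_geometric_of_lt_one hlam0 hlam1).sum_le_tsum _ fun i _ => pow_nonneg hlam0 i

theorem sum_Ico_le_of_decay {M L : ℕ} {ψ : ℕ → ℝ} {C D lam : ℝ} (hlam0 : 0 ≤ lam)
    (hlam1 : lam < 1) (hC : 0 ≤ C) (hD : 0 ≤ D) (hbound : ∀ l, ψ l ≤ 2 * C)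
    (hdecay : ∀ l ∈ Ico M (L - M), ψ l ≤ C * (lam ^ (l - M) * D + lam ^ (L - M - 1 - l))) :
    ∑ l ∈ Ico M L, ψ l ≤ C * ((D + 1) / (1 - lam) + 2 * M) := by
  have hearly : ∑ l ∈ Ico M (L - M), ψ l ≤ C * ((D + 1) / (1 - lam)) := by
    calc _ ≤ ∑ l ∈ Ico M (L - M), C * (lam ^ (l - M) * D + lam ^ (L - M - 1 - l)) :=
          sum_le_sum hdecay
      _ = C * ((∑ l ∈ Ico M (L - M), lam ^ (l - M)) * D +
            ∑ l ∈ Ico M (L - M), lam ^ (L - M - 1 - l)) := by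
          rw [← mul_sum, sum_add_distrib, sum_mul]
      _ ≤ C * (1 / (1 - lam) * D + 1 / (1 - lam)) := by
          gcongr <;> refine sum_pow_comp_le_of_injOn hlam0 hlam1 fun l hl l' hl' h => ?_ <;>
            · simp only [coe_Ico, Set.mem_Ico] at hl hl' h
              omega
      _ = C * ((D + 1) / (1 - lam)) := by ring
  have hlate : ∑ l ∈ Ico M L with l ∉ Ico M (L - M), ψ l ≤ C * (2 * M) := by
    have hcard : #{l ∈ Ico M L | l ∉ Ico M (L - M)} ≤ M := by
      refine (card_le_card (t := Ico (L - M) L) fun l hl => ?_).trans (by rw [Nat.card_Ico]; omega)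
      simp only [mem_filter, mem_Ico] at hl ⊢
      omega
    calc _ ≤ #{l ∈ Ico M L | l ∉ Ico M (L - M)} • (2 * C) :=
          sum_le_card_nsmul _ _ _ fun l _ => hbound l
      _ ≤ M • (2 * C) := nsmul_le_nsmul_left (by positivity) hcard
      _ = C * (2 * M) := by rw [nsmul_eq_mul]; ring
  rw [← sum_filter_add_sum_filter_not _ (· ∈ Ico M (L - M)), mul_add,
    filter_mem_eq_inter, inter_eq_right.mpr (Ico_subset_Ico_right (Nat.sub_le L M))]
  exact add_le_add hearly hlate

theorem abs_average_Ico_sub_le {M L : ℕ} (hML : M < L) (φ : ℕ → ℝ) (B : ℝ) :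
    |(∑ l ∈ Ico M L, φ l) / ((L : ℝ) - M) - B| ≤
      (∑ l ∈ Ico M L, |φ l - B|) / ((L : ℝ) - M) := by
  have hpos : (0 : ℝ) < (L : ℝ) - M := sub_pos.mpr (Nat.cast_lt.mpr hML)
  have hcentre : (∑ l ∈ Ico M L, φ l) / ((L : ℝ) - M) - B =
      (∑ l ∈ Ico M L, (φ l - B)) / ((L : ℝ) - M) := by
    rw [sum_sub_distrib, sum_const, Nat.card_Ico, nsmul_eq_mul, Nat.cast_sub hML.le]
    field_simp
  rw [hcentre, abs_div, abs_of_pos hpos]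
  gcongr
  exact abs_sum_le_sum_abs _ _

theorem abs_average_Ico_sub_le_of_decay {M L : ℕ} (hML : M < L) {φ : ℕ → ℝ} {B C D lam : ℝ}
    (hlam0 : 0 ≤ lam) (hlam1 : lam < 1) (hC : 0 ≤ C) (hD : 0 ≤ D)
    (hbound : ∀ l, |φ l - B| ≤ 2 * C)
    (hdecay : ∀ l ∈ Ico M (L - M), |φ l - B| ≤ C * (lam ^ (l - M) * D + lam ^ (L - M - 1 - l))) :
    |(∑ l ∈ Ico M L, φ l) / ((L : ℝ) - M) - B| ≤
      2 * C * ((D + 1) / (1 - lam) + 2 * M) / L := by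
  have hML' : (M : ℝ) < L := Nat.cast_lt.mpr hML
  have hpos : (0 : ℝ) < (L : ℝ) - M := sub_pos.mpr hML'
  have hL : (0 : ℝ) < L := (Nat.cast_nonneg M).trans_lt hML'
  have hlam : 0 < 1 - lam := sub_pos.mpr hlam1
  refine (abs_average_Ico_sub_le hML φ B).trans ?_
  rcases le_total (2 * (M : ℝ)) L with hlong | hshort
  · calc _ ≤ C * ((D + 1) / (1 - lam) + 2 * M) / (L / 2) := by
          gcongr
          · exact sum_Ico_le_of_decay hlam0 hlam1 hC hD hbound hdecay
          · linarith
      _ = _ := by ring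
  · calc _ ≤ 2 * C := by
          rw [div_le_iff₀ hpos, ← Nat.cast_sub hML.le, ← Nat.card_Ico, mul_comm, ← nsmul_eq_mul]
          exact sum_le_card_nsmul _ _ _ fun l _ => hbound l
      _ ≤ _ := by
          rw [le_div_iff₀ hL]
          gcongr
          exact hshort.trans (le_add_of_nonneg_left (div_nonneg (by linarith) hlam.le))

end Averaging

section AveragesOfKernels

open scoped Matrix

/-- The history of `X` at position `l`: its `j`-th term is the token `j` steps before position `l`.
The truncated subtraction repeats the first token once `j` exceeds `l`. -/
def history {α : Type*} (l : ℕ) (X : ℕ → α) : ℕ → α := fun j => X (l - j)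

/-- The paper's `A` for a general kernel `G`: the average over `M ≤ l < L` of the expectation under
`p` of `G` evaluated at the histories of positions `l` and `L`. -/
noncomputable def chainAverage {α : Type*} [Fintype α] (M L : ℕ) (p : (Fin (L + 1) → α) → ℝ)
    (G : (ℕ → α) → (ℕ → α) → ℝ) : ℝ :=
  (∑ l ∈ (Ico M L).attach, ∑ x : Fin (L + 1) → α, p x *
      G (fun j => x ⟨l.1 - j, lt_of_le_of_lt (Nat.sub_le _ _) (icoLtSucc l)⟩)
        (fun j => x ⟨L - j, Nat.lt_succ_of_le (Nat.sub_le _ _)⟩)) / ((L : ℝ) - M)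

/-- The paper's `B` for a general kernel `G`: the expectation of `G` evaluated at the histories of
two independent windows with law `μb`. -/
noncomputable def independentAverage {α : Type*} [Fintype α] (M : ℕ)
    (μb : (Fin (M + 1) → α) → ℝ) (G : (ℕ → α) → (ℕ → α) → ℝ) : ℝ :=
  ∑ y : Fin (M + 1) → α, ∑ y' : Fin (M + 1) → α, μb y * μb y' *
    G (fun j => y ⟨M - j, Nat.lt_succ_of_le (Nat.sub_le _ _)⟩)
      (fun j => y' ⟨M - j, Nat.lt_succ_of_le (Nat.sub_le _ _)⟩)

theorem history_extendSeq {α : Type*} [Zero α] {T l : ℕ} (x : Fin T → α) (hl : l < T) :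
    history l (extendSeq x) = fun j => x ⟨l - j, (Nat.sub_le _ _).trans_lt hl⟩ :=
  funext fun _ => extendSeq_of_lt x _

theorem dependsOn_comp_history {α β : Type*} (M : ℕ) (a : (ℕ → α) → β) :
    DependsOn (fun X => a (history M X)) (Set.Iio (M + 1)) := fun _ _ h =>
  congrArg a (funext fun j => h (M - j) (Nat.lt_succ_of_le (Nat.sub_le M j)))

theorem dependsOn_Iic_history_eq {α β : Type*} {M l : ℕ} (hl : M ≤ l) {a : (ℕ → α) → β}
    (ha : DependsOn a (Set.Iic M)) (X : ℕ → α) :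
    a (history l X) = a (history M (shiftSeq (l - M) X)) := by
  refine ha fun j hj => congrArg X ?_
  have : j ≤ M := hj
  omega

theorem independentAverage_sum_mul {α τ : Type*} [Fintype α] [Zero α] [Fintype τ] (M : ℕ)
    (μb : (Fin (M + 1) → α) → ℝ) (a b : τ → (ℕ → α) → ℝ) :
    independentAverage M μb (fun Y Y' => ∑ t, a t Y * b t Y') =
      ∑ t, (∑ y, μb y * a t (history M (extendSeq y))) *
        ∑ y, μb y * b t (history M (extendSeq y)) := by
  simp only [history_extendSeq _ M.lt_succ_self, sum_mul_sum]
  symm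
  rw [independentAverage, sum_comm]
  refine sum_congr rfl fun y _ => ?_
  rw [sum_comm]
  refine sum_congr rfl fun y' _ => ?_
  rw [mul_sum]
  exact sum_congr rfl fun t _ => mul_mul_mul_comm _ _ _ _

variable {d n R : ℕ} [NeZero d] {r : Fin n → ℕ} {pk : (Fin n → Fin d) → Fin d → ℝ}

theorem sum_ngramProb_mul_extendSeq {T j : ℕ} (hT : T = R + j) (hRT : R ≤ T)
    (η : (Fin R → Fin d) → ℝ) (F : (ℕ → Fin d) → ℝ) :
    ∑ x, ngramProb d n R T r pk η hRT x * F (extendSeq x) = ngramExp r pk η j F := by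
  subst hT
  rfl

theorem chainAverage_ngramProb {M L J : ℕ} (hJ : L + 1 = R + J) (hRL : R ≤ L + 1)
    (η : (Fin R → Fin d) → ℝ) (G : (ℕ → Fin d) → (ℕ → Fin d) → ℝ) :
    chainAverage M L (ngramProb d n R (L + 1) r pk η hRL) G =
      (∑ l ∈ Ico M L, ngramExp r pk η J fun X => G (history l X) (history L X)) /
        ((L : ℝ) - M) := by
  rw [chainAverage, ← sum_attach (Ico M L)]
  simp only [← sum_ngramProb_mul_extendSeq hJ hRL, history_extendSeq _ L.lt_succ_self,
    history_extendSeq _ (icoLtSucc _)]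

theorem abs_ngramExp_sum_mul_history_sub_le {τ : Type*} [Fintype τ] (hR : 0 < R)
    (hrpos : ∀ k, 0 < r k) (hrR : ∀ k, r k ≤ R) (hpk0 : ∀ Y e, 0 ≤ pk Y e)
    (hpk1 : ∀ Y, ∑ e, pk Y e = 1) {μ0 μ : (Fin R → Fin d) → ℝ} (hμ01 : ∑ Z, μ0 Z = 1)
    {lam : ℝ} (hgap : HasSpectralGap (windowMatrix d n R hR r hrpos pk) μ lam)
    (hlam0 : 0 ≤ lam) (hlam1 : lam ≤ 1) {M L j J : ℕ} (hj : M + 1 = R + j) (hJ : L + 1 = R + J)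
    {a b : τ → (ℕ → Fin d) → ℝ} {Ca Cb : ℝ} (ha : ∀ t, DependsOn (a t) (Set.Iic M))
    (hb : ∀ t, DependsOn (b t) (Set.Iic M)) (hCa : ∀ X, ∑ t, a t X ^ 2 ≤ Ca)
    (hCb : ∀ X, ∑ t, b t X ^ 2 ≤ Cb) {l : ℕ} (hl : l ∈ Ico M (L - M)) :
    |ngramExp r pk μ0 J (fun X => ∑ t, a t (history l X) * b t (history L X)) -
      ∑ t, ngramExp r pk μ j (fun X => a t (history M X)) *
        ngramExp r pk μ j (fun X => b t (history M X))| ≤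
      √(Ca * Cb) * (lam ^ (l - M) * √(chiSq μ0 μ) + lam ^ (L - M - 1 - l)) := by
  obtain ⟨hMl, hlL⟩ := mem_Ico.mp hl
  obtain ⟨m, hm⟩ := Nat.exists_eq_add_of_le (show l + j ≤ L by omega)
  have hJ' : J = l - M + (j + m + j) := by omega
  have hLM : L - M = l - M + (j + m) := by omega
  have hML : M ≤ L := by omega
  simp only [hJ', dependsOn_Iic_history_eq hMl (ha _), dependsOn_Iic_history_eq hML (hb _), hLM]
  refine (abs_ngramExp_sum_mul_shiftSeq_sub_le hR hrpos hrR hpk0 hpk1 hgap hlam0 hμ01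
    (fun t => hj ▸ dependsOn_comp_history M (a t)) (fun X => hCa (history M X))
    (fun X => hCb (history M X)) (l - M) m).trans ?_
  refine mul_le_mul_of_nonneg_left (add_le_add le_rfl ?_) (Real.sqrt_nonneg _)
  exact pow_le_pow_of_le_one hlam0 hlam1 (by omega)

theorem abs_chainAverage_sub_independentAverage_le {τ : Type*} [Fintype τ] (hR : 0 < R)
    (hrpos : ∀ k, 0 < r k) (hrR : ∀ k, r k ≤ R) (hpk0 : ∀ Y e, 0 ≤ pk Y e)
    (hpk1 : ∀ Y, ∑ e, pk Y e = 1) {μ0 μ : (Fin R → Fin d) → ℝ} (hμ00 : ∀ Z, 0 ≤ μ0 Z)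
    (hμ01 : ∑ Z, μ0 Z = 1) {lam : ℝ}
    (hgap : HasSpectralGap (windowMatrix d n R hR r hrpos pk) μ lam) (hlam0 : 0 ≤ lam)
    (hlam1 : lam < 1) {M L : ℕ} (hML : M < L) (hRM : R ≤ M + 1) (hRL : R ≤ L + 1)
    {a b : τ → (ℕ → Fin d) → ℝ} {Ca Cb : ℝ} (ha : ∀ t, DependsOn (a t) (Set.Iic M))
    (hb : ∀ t, DependsOn (b t) (Set.Iic M)) (hCa : ∀ X, ∑ t, a t X ^ 2 ≤ Ca)
    (hCb : ∀ X, ∑ t, b t X ^ 2 ≤ Cb) :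
    |chainAverage M L (ngramProb d n R (L + 1) r pk μ0 hRL) (fun Y Y' => ∑ t, a t Y * b t Y') -
        independentAverage M (ngramProb d n R (M + 1) r pk μ hRM)
          (fun Y Y' => ∑ t, a t Y * b t Y')| ≤
      2 * √(Ca * Cb) * ((√(chiSq μ0 μ) + 1) / (1 - lam) + 2 * M) / L := by
  obtain ⟨j, hj⟩ := Nat.exists_eq_add_of_le hRM
  obtain ⟨J, hJ⟩ := Nat.exists_eq_add_of_le hRL
  have hμ0 : (0 : (Fin R → Fin d) → ℝ) ≤ μ := fun Z => (hgap.pos Z).le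
  have hwindow (c : (ℕ → Fin d) → ℝ) :
      ∑ y, ngramProb d n R (M + 1) r pk μ hRM y * c (history M (extendSeq y)) =
        ngramExp r pk μ j fun X => c (history M X) :=
    sum_ngramProb_mul_extendSeq hj hRM μ fun X => c (history M X)
  rw [chainAverage_ngramProb hJ, independentAverage_sum_mul]
  simp only [hwindow]
  have hchain (l) : |ngramExp r pk μ0 J fun X => ∑ t, a t (history l X) * b t (history L X)| ≤
      √(Ca * Cb) :=
    abs_ngramExp_le hR hrpos hpk0 hpk1 hμ00 hμ01 J fun X => abs_sum_mul_le_sqrt_mul (hCa _) (hCb _)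
  have hindep : |∑ t, ngramExp r pk μ j (fun X => a t (history M X)) *
      ngramExp r pk μ j (fun X => b t (history M X))| ≤ √(Ca * Cb) :=
    abs_sum_mul_le_sqrt_mul
      (sum_sq_ngramExp_le hR hrpos hpk0 hpk1 hμ0 hgap.sum_eq_one j fun X => hCa (history M X))
      (sum_sq_ngramExp_le hR hrpos hpk0 hpk1 hμ0 hgap.sum_eq_one j fun X => hCb (history M X))
  refine abs_average_Ico_sub_le_of_decay hML hlam0 hlam1 (Real.sqrt_nonneg _) (Real.sqrt_nonneg _)
    (fun l => (abs_sub _ _).trans ?_) fun l hl => ?_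
  · exact (add_le_add (hchain l) hindep).trans_eq (two_mul _).symm
  · exact abs_ngramExp_sum_mul_history_sub_le hR hrpos hrR hpk0 hpk1 hμ01 hgap hlam0 hlam1.le
      hj hJ ha hb hCa hCb hl

end AveragesOfKernels

section TokenMarginal

theorem sum_tokenMarg {d M : ℕ} (μb : (Fin (M + 1) → Fin d) → ℝ) :
    ∑ e, tokenMarg d M μb e = ∑ y, μb y := by
  simp only [tokenMarg]
  rw [sum_comm]
  simp only [sum_ite_eq, mem_univ, if_true]

variable {d n R M : ℕ} [NeZero d] {r : Fin n → ℕ} {pk : (Fin n → Fin d) → Fin d → ℝ}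
  {μ : (Fin R → Fin d) → ℝ}

theorem sum_ngramProb (hR : 0 < R) (hrpos : ∀ k, 0 < r k) (hpk1 : ∀ Y, ∑ e, pk Y e = 1) {T : ℕ}
    (hRT : R ≤ T) (η : (Fin R → Fin d) → ℝ) :
    ∑ x, ngramProb d n R T r pk η hRT x = ∑ Z, η Z := by
  obtain ⟨j, hj⟩ := Nat.exists_eq_add_of_le hRT
  have h := sum_ngramProb_mul_extendSeq (r := r) (pk := pk) hj hRT η fun _ => 1
  simpa only [mul_one, ngramExp_const hR hrpos hpk1] using h

theorem le_tokenMarg_ngramProb (hR : 0 < R) (hrpos : ∀ k, 0 < r k)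
    (hpk0 : ∀ Y e, 0 ≤ pk Y e) (hpk1 : ∀ Y, ∑ e, pk Y e = 1) {η : (Fin R → Fin d) → ℝ}
    (hη : 0 ≤ η) (hη1 : ∑ Z, η Z = 1) (hRM : R ≤ M) {γ : ℝ} {e : Fin d}
    (hγ : ∀ Y, γ ≤ pk Y e) :
    γ ≤ tokenMarg d M (ngramProb d n R (M + 1) r pk η (hRM.trans M.le_succ)) e := by
  obtain ⟨j, rfl⟩ := Nat.exists_eq_add_of_le hRM
  have hlast : tokenMarg d (R + j)
      (ngramProb d n R (R + j + 1) r pk η (hRM.trans (R + j).le_succ)) e =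
        ngramExp r pk η (j + 1) fun X => if X (R + j) = e then 1 else 0 := by
    rw [← sum_ngramProb_mul_extendSeq rfl (hRM.trans (R + j).le_succ)]
    simp only [tokenMarg, extendSeq_of_lt _ (R + j).lt_succ_self, mul_ite, mul_one, mul_zero]
    rfl
  rw [hlast, ngramExp_succ hR hrpos]
  calc γ = ngramExp r pk η j fun _ => γ := by rw [ngramExp_const hR hrpos hpk1, hη1, one_mul]
    _ ≤ _ := ngramExp_mono hpk0 hη j fun X => by simpa [stepAvg] using hγ _

end TokenMarginal

section AttentionKernel

theorem sum_mul_prod_eq_sum_mul_prod_sum {α ι : Type*} [Fintype α] [Fintype ι] [DecidableEq ι]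
    (c : α → ℝ) (w : ι → α → ℝ) :
    ∑ t : α × (ι → α), c t.1 * ∏ h, w h (t.2 h) = (∑ k, c k) * ∏ h, ∑ k, w h k := by
  rw [prod_univ_sum, Fintype.piFinset_univ, sum_mul_sum, Fintype.sum_prod_type]

variable {α ι : Type*} [DecidableEq α] {M : ℕ}

/-- The coordinate at the token `k` of the vector `Σ_j s_j Y_j` that a head with attention weights
`s` reads off the history `Y`, tokens being identified with basis vectors. -/
def attnWeight (M : ℕ) (s : ℕ → ℝ) (Y : ℕ → α) (k : α) : ℝ :=
  ∑ j ∈ Icc 1 M, s j * (if Y j = k then 1 else 0)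

theorem attnWeight_congr {s : ℕ → ℝ} {Y Y' : ℕ → α} (h : ∀ j ∈ Set.Iic M, Y j = Y' j) :
    attnWeight M s Y = attnWeight M s Y' := by
  funext k
  exact sum_congr rfl fun j hj => by rw [h j (mem_Icc.mp hj).2]

variable [Fintype α] [Fintype ι]

/-- The integrand of the paper's averages as a function of the histories `Y` and `Y'` of two
positions: the centred agreement of their tokens times the product over the heads of the inner
products of the attention vectors. -/
noncomputable def attnKernel (M : ℕ) (q : α → ℝ) (σ σt : ι → ℕ → ℝ) (Y Y' : ℕ → α) : ℝ :=
  ((∑ k, (if Y' 0 = k ∧ Y 0 = k then (1 : ℝ) else 0) / q k) - 1) *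
    ∏ h, ∑ k, attnWeight M (σ h) Y k * attnWeight M (σt h) Y' k

theorem attnKernel_swap (q : α → ℝ) (σ σt : ι → ℕ → ℝ) (Y Y' : ℕ → α) :
    attnKernel M q σt σ Y' Y = attnKernel M q σ σt Y Y' := by
  simp only [attnKernel, and_comm, mul_comm (attnWeight M (σ _) Y _)]

theorem sum_attnWeight_sq_le_one {s : ℕ → ℝ} (hs : ∀ j, 0 ≤ s j) (hs1 : ∑ j ∈ Icc 1 M, s j = 1)
    (Y : ℕ → α) : ∑ k, attnWeight M s Y k ^ 2 ≤ 1 := by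
  have hsum : ∑ k, attnWeight M s Y k = 1 := by
    simp only [attnWeight]
    rw [sum_comm]
    simp [hs1]
  have hnonneg (k) : 0 ≤ attnWeight M s Y k :=
    sum_nonneg fun j _ => mul_nonneg (hs j) (by split_ifs <;> norm_num)
  have hle (k) : attnWeight M s Y k ≤ 1 :=
    (single_le_sum (fun k _ => hnonneg k) (mem_univ k)).trans_eq hsum
  calc ∑ k, attnWeight M s Y k ^ 2 ≤ ∑ k, attnWeight M s Y k :=
        sum_le_sum fun k _ => pow_le_of_le_one (hnonneg k) (hle k) two_ne_zero
    _ = 1 := hsum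

theorem attnKernel_eq_sum_mul [DecidableEq ι] (q : α → ℝ) (σ σt : ι → ℕ → ℝ) (Y Y' : ℕ → α) :
    attnKernel M q σ σt Y Y' = ∑ t : α × (ι → α),
      ((if Y 0 = t.1 then 1 else 0) * ∏ h, attnWeight M (σ h) Y (t.2 h)) *
        (((if Y' 0 = t.1 then 1 else 0) / q t.1 - 1) * ∏ h, attnWeight M (σt h) Y' (t.2 h)) := by
  simp only [mul_mul_mul_comm, ← prod_mul_distrib]
  rw [sum_mul_prod_eq_sum_mul_prod_sum
    (fun k => (if Y 0 = k then 1 else 0) * ((if Y' 0 = k then 1 else 0) / q k - 1))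
    (fun h k => attnWeight M (σ h) Y k * attnWeight M (σt h) Y' k)]
  simp [attnKernel, and_comm, ite_and, ite_div]

theorem sum_sq_mul_prod_attnWeight_le [DecidableEq ι] {c : α → ℝ} {C : ℝ}
    (hc : ∑ k, c k ^ 2 ≤ C) {σ : ι → ℕ → ℝ} (hσ : ∀ h j, 0 ≤ σ h j)
    (hσ1 : ∀ h, ∑ j ∈ Icc 1 M, σ h j = 1) (Y : ℕ → α) :
    ∑ t : α × (ι → α), (c t.1 * ∏ h, attnWeight M (σ h) Y (t.2 h)) ^ 2 ≤ C := by
  simp only [mul_pow, ← prod_pow]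
  rw [sum_mul_prod_eq_sum_mul_prod_sum (fun k => c k ^ 2) fun h k => attnWeight M (σ h) Y k ^ 2]
  refine (mul_le_of_le_one_right (sum_nonneg fun _ _ => sq_nonneg _) ?_).trans hc
  exact prod_le_one (fun h _ => sum_nonneg fun _ _ => sq_nonneg _)
    fun h _ => sum_attnWeight_sq_le_one (hσ h) (hσ1 h) Y

theorem sum_sq_indicator_div_sub_one_le {q : α → ℝ} (hq1 : ∑ k, q k = 1) {γ : ℝ} (hγ : 0 < γ)
    (hqγ : ∀ k, γ ≤ q k) (z : α) :
    ∑ k, ((if z = k then 1 else 0) / q k - 1) ^ 2 ≤ (1 / γ) ^ 2 := by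
  have hqz : q z ≤ 1 :=
    (single_le_sum (fun k _ => hγ.le.trans (hqγ k)) (mem_univ z)).trans_eq hq1
  have hcard : (Fintype.card α : ℝ) ≤ 1 / γ := by
    rw [le_div_iff₀ hγ, ← hq1, ← nsmul_eq_mul]
    exact card_nsmul_le_sum univ q γ fun k _ => hqγ k
  have hexpand : ∑ k, ((if z = k then 1 else 0) / q k - 1) ^ 2 =
      (1 / q z) ^ 2 - 2 * (1 / q z) + Fintype.card α := by
    have hsq (k) : ((if z = k then 1 else 0) / q k - 1) ^ 2 =
        (if z = k then (1 / q k) ^ 2 - 2 * (1 / q k) else 0) + 1 := by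
      split_ifs <;> ring
    simp [hsq, sum_add_distrib]
  have hlow : 1 ≤ 1 / q z := one_le_one_div (hγ.trans_le (hqγ z)) hqz
  have hhigh : 1 / q z ≤ 1 / γ := one_div_le_one_div_of_le hγ (hqγ z)
  rw [hexpand]
  nlinarith

end AttentionKernel

theorem mixing_bound_le {D lam γ κ M L : ℝ} (hD : 0 ≤ D) (hlam : lam < 1) (hγ0 : 0 < γ)
    (hγ1 : γ ≤ 1) (hκ : 0 ≤ κ) (hM : 0 ≤ M) (hL : 0 < L) :
    2 / γ * ((√D + 1) / (1 - lam) + 2 * M) / L ≤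
      8 * M / (L * γ) + 16 * √(D + 1) / (L * (1 - lam) * γ ^ (κ / 2 + 1)) := by
  have hlam' : 0 < 1 - lam := sub_pos.mpr hlam
  have hsqrt : √D + 1 ≤ 2 * √(D + 1) := by
    have h1 : √D ≤ √(D + 1) := Real.sqrt_le_sqrt (by linarith)
    have h2 : 1 ≤ √(D + 1) := Real.one_le_sqrt.mpr (by linarith)
    linarith
  have hpow : γ ^ (κ / 2 + 1) ≤ γ := by
    simpa using Real.rpow_le_rpow_of_exponent_ge hγ0 hγ1 (show (1 : ℝ) ≤ κ / 2 + 1 by linarith)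
  calc _ ≤ 2 / γ * (2 * √(D + 1) / (1 - lam) + 2 * M) / L := by gcongr
    _ = 4 * M / (L * γ) + 4 * √(D + 1) / (L * (1 - lam) * γ) := by
        field_simp
        ring
    _ ≤ _ := by gcongr <;> norm_num

theorem statement13_general {d n R M L : ℕ} [NeZero d] (hR : 0 < R) {r : Fin n → ℕ}
    (hrpos : ∀ k, 0 < r k) (hrR : ∀ k, r k ≤ R) {pk : (Fin n → Fin d) → Fin d → ℝ}
    (hpk0 : ∀ Y e, 0 ≤ pk Y e) (hpk1 : ∀ Y, ∑ e, pk Y e = 1) {μ0 μ : (Fin R → Fin d) → ℝ}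
    (hμ00 : ∀ Z, 0 ≤ μ0 Z) (hμ01 : ∑ Z, μ0 Z = 1) {lam : ℝ} (hlam0 : 0 ≤ lam) (hlam1 : lam < 1)
    (hgap : HasSpectralGap (windowMatrix d n R hR r hrpos pk) μ lam) (hML : M < L)
    (hRM : R ≤ M + 1) (hRL : R ≤ L + 1) {γ : ℝ} (hγ : 0 < γ)
    (hqγ : ∀ e, γ ≤ tokenMarg d M (ngramProb d n R (M + 1) r pk μ hRM) e)
    {ι : Type*} [Fintype ι] {σ σt : ι → ℕ → ℝ}
    (hσ : ∀ h, (∀ i, 0 ≤ σ h i) ∧ ∑ i ∈ Icc 1 M, σ h i = 1)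
    (hσt : ∀ h, (∀ i, 0 ≤ σt h i) ∧ ∑ i ∈ Icc 1 M, σt h i = 1) :
    let mubar := ngramProb d n R (M + 1) r pk μ hRM
    let G := attnKernel M (tokenMarg d M mubar) σ σt
    |chainAverage M L (ngramProb d n R (L + 1) r pk μ0 hRL) G - independentAverage M mubar G| ≤
      2 / γ * ((√(chiSq μ0 μ) + 1) / (1 - lam) + 2 * M) / L := by
  classical
  intro mubar G
  have hq1 : ∑ e, tokenMarg d M mubar e = 1 := by
    rw [sum_tokenMarg, sum_ngramProb hR hrpos hpk1, hgap.sum_eq_one]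
  have hG : G = fun Y Y' => ∑ t, _ := funext₂ (attnKernel_eq_sum_mul (tokenMarg d M mubar) σ σt)
  have hC : 2 * √(1 * (1 / γ) ^ 2) = 2 / γ := by
    rw [one_mul, Real.sqrt_sq (one_div_nonneg.mpr hγ.le), mul_one_div]
  rw [hG, ← hC]
  refine abs_chainAverage_sub_independentAverage_le hR hrpos hrR hpk0 hpk1 hμ00 hμ01 hgap hlam0
    hlam1 hML hRM hRL (fun t Y Y' h => ?_) (fun t Y Y' h => ?_) (fun Y => ?_) (fun Y => ?_)
  · simp only [h 0 (Set.mem_Iic.mpr M.zero_le), attnWeight_congr h]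
  · simp only [h 0 (Set.mem_Iic.mpr M.zero_le), attnWeight_congr h]
  · exact sum_sq_mul_prod_attnWeight_le (c := fun k => if Y 0 = k then 1 else 0) (by simp)
      (fun h => (hσ h).1) (fun h => (hσ h).2) Y
  · exact sum_sq_mul_prod_attnWeight_le (sum_sq_indicator_div_sub_one_le hq1 hγ hqγ (Y 0))
      (fun h => (hσt h).1) (fun h => (hσt h).2) Y

/-- Replacing the empirical average over positions `l = M+1,…,L` of the
chain by an expectation over two independent copies of the stationary window distribution
incurs an error of at most `8M/(Lγ) + 16√(D₀+1)/(L(1−λ)γ^{|S|/2+1})`. -/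
theorem statement13
    (d n R M L : ℕ) (hd : 0 < d) (hn : 0 < n) (hR : 0 < R)
    (r : Fin n → ℕ) (hrpos : ∀ i, 0 < r i) (hrmono : StrictMono r)
    (hrR : ∀ i, r i ≤ R) (hRmax : ∃ i, r i = R)
    (pk : (Fin n → Fin d) → Fin d → ℝ)
    (hpk0 : ∀ Y e, 0 ≤ pk Y e) (hpk1 : ∀ Y, ∑ e, pk Y e = 1)
    (μ0 : (Fin R → Fin d) → ℝ) (hμ00 : ∀ Z, 0 ≤ μ0 Z) (hμ01 : ∑ Z, μ0 Z = 1)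
    (μ : (Fin R → Fin d) → ℝ) (hμpos : ∀ Z, 0 < μ Z) (hμ1 : ∑ Z, μ Z = 1)
    (hstat : ∀ Z', μ Z' = ∑ Z, windowMatrix d n R hR r hrpos pk Z' Z * μ Z)
    (lam : ℝ) (hlam0 : 0 ≤ lam) (hlam1 : lam < 1)
    (hop : ∀ v : (Fin R → Fin d) → ℝ,
      Real.sqrt (∑ Z', Matrix.mulVec (specA d n R hR r hrpos pk μ) v Z' ^ 2)
        ≤ lam * Real.sqrt (∑ Z, v Z ^ 2))
    (γ : ℝ) (hγ : 0 < γ) (hpkγ : ∀ Y e, γ ≤ pk Y e)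
    (hRM : R ≤ M) (hML : 2 * M ≤ L) (hML1 : M + 1 ≤ L)
    (ι : Type) [Fintype ι]
    (σ σt : ι → ℕ → ℝ)
    (hσ : ∀ h, (∀ i, 0 ≤ σ h i) ∧ ∑ i ∈ Finset.Icc 1 M, σ h i = 1)
    (hσt : ∀ h, (∀ i, 0 ≤ σt h i) ∧ ∑ i ∈ Finset.Icc 1 M, σt h i = 1) :
    let p := ngramProb d n R (L + 1) r pk μ0 (by omega);
    let mubar := ngramProb d n R (M + 1) r pk μ (by omega);
    let q : Fin d → ℝ := tokenMarg d M mubar;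
    let A := (∑ l ∈ (Finset.Ico M L).attach,
        ∑ x : Fin (L + 1) → Fin d, p x *
          (((∑ k : Fin d,
              (if x ⟨L, Nat.lt_succ_self L⟩ = k ∧ x ⟨l.1, icoLtSucc l⟩ = k then (1 : ℝ) else 0) /
                q k) - 1) *
            ∏ h : ι, ∑ kk : Fin d,
              (∑ j ∈ Finset.Icc 1 M, σ h j *
                  (if x ⟨l.1 - j, lt_of_le_of_lt (Nat.sub_le _ _) (icoLtSucc l)⟩ = kk
                    then (1 : ℝ) else 0)) *
              (∑ i ∈ Finset.Icc 1 M, σt h i *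
                  (if x ⟨L - i, Nat.lt_succ_of_le (Nat.sub_le _ _)⟩ = kk
                    then (1 : ℝ) else 0)))) /
      ((L : ℝ) - M);
    let B := ∑ y : Fin (M + 1) → Fin d, ∑ y' : Fin (M + 1) → Fin d,
      mubar y * mubar y' *
        (((∑ k : Fin d,
            (if y ⟨M, Nat.lt_succ_self M⟩ = k ∧ y' ⟨M, Nat.lt_succ_self M⟩ = k
              then (1 : ℝ) else 0) / q k) - 1) *
          ∏ h : ι, ∑ kk : Fin d,
            (∑ i ∈ Finset.Icc 1 M, σt h i *
                (if y' ⟨M - i, Nat.lt_succ_of_le (Nat.sub_le _ _)⟩ = kk then (1 : ℝ) else 0)) *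
            (∑ j ∈ Finset.Icc 1 M, σ h j *
                (if y ⟨M - j, Nat.lt_succ_of_le (Nat.sub_le _ _)⟩ = kk then (1 : ℝ) else 0)));
    |A - B| ≤ 8 * M / (L * γ) +
      16 * Real.sqrt (chiSq μ0 μ + 1) /
        (L * (1 - lam) * γ ^ ((Fintype.card ι : ℝ) / 2 + 1)) := by
  have : NeZero d := ⟨hd.ne'⟩
  intro p mubar q A B
  have hgap : HasSpectralGap (windowMatrix d n R hR r hrpos pk) μ lam :=
    ⟨hμpos, hμ1, funext fun Z' => (hstat Z').symm, hop⟩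
  have hqγ : ∀ e, γ ≤ q e := fun e =>
    le_tokenMarg_ngramProb hR hrpos hpk0 hpk1 (fun Z => (hμpos Z).le) hμ1 hRM (hpkγ · e)
  have hγ1 : γ ≤ 1 := (hpkγ 0 0).trans <|
    (single_le_sum (fun e _ => hpk0 0 e) (mem_univ 0)).trans_eq (hpk1 0)
  have hD : 0 ≤ chiSq μ0 μ := sum_nonneg fun Z _ => div_nonneg (sq_nonneg _) (hμpos Z).le
  have hA : A = chainAverage M L p (attnKernel M q σ σt) := rfl
  have hB : B = independentAverage M mubar (attnKernel M q σ σt) := by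
    rw [← funext₂ (attnKernel_swap q σ σt)]
    rfl
  rw [hA, hB]
  exact (statement13_general hR hrpos hrR hpk0 hpk1 hμ00 hμ01 hlam0 hlam1 hgap (by omega) (by omega)
    (by omega) hγ hqγ hσ hσt).trans <| mixing_bound_le hD hlam1 hγ hγ1 (Nat.cast_nonneg _)
      (Nat.cast_nonneg M) (Nat.cast_pos.mpr (by omega))
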